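/- Let m, n ∈ ℕ and let s_{j,ℓ} ∈ ℂ with Re(s_{j,ℓ}) > 0 for all 1 ≤ j ≤ n, 1 ≤ ℓ ≤ m, and assume s_{j,ℓ} + conj(s_{k,ℓ}) ≠ 1 for all j, k, ℓ. Then the n×n complex matrix whose (j,k) entry is ∏_{ℓ=1}^{m} (1 − 2^{1 − s_{j,ℓ} − conj(s_{k,ℓ})}) Γ(s_{j,ℓ} + conj(s_{k,ℓ})) ζ(s_{j,ℓ} + conj(s_{k,ℓ})) is positive semidefinite, where Γ is the Gamma function and ζ is the Riemann zeta function. -/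

import Mathlib

open Complex ComplexOrder

open Filter MeasureTheory Set Topology

open Matrix (of)

/-!
Each factor of an entry is `Γ(z) η(z)` at `z = s j l + conj (s k l)`, where `η` is the Dirichlet eta
function, and `Γ(z) η(z) = ∫₀^∞ u ^ (z - 1) / (e ^ u + 1) du` for `0 < Re z`. At such a `z` the
integrand is `v j * conj (v k)` times a positive weight, with `v j = u ^ s j l`, so each factor is
an integral of rank-one positive semidefinite matrices. The Schur product theorem multiplies the
factors.
-/

section PosSemidef

variable {ι : Type*}

lemma posSemidef_mul_star {R : Type*} [Ring R] [PartialOrder R] [StarRing R]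
    [StarOrderedRing R] (v : ι → R) : (of fun j k ↦ v j * star (v k)).PosSemidef := by
  refine ⟨Matrix.IsHermitian.ext fun j k ↦ by simp, fun x ↦ ?_⟩
  have hsq : (x.sum fun j xj ↦ x.sum fun k xk ↦ star xj * (v j * star (v k)) * xk) =
      (x.sum fun j xj ↦ star xj * v j) * star (x.sum fun j xj ↦ star xj * v j) := by
    simp only [Finsupp.sum, star_sum, Finset.sum_mul_sum, star_mul, star_star, mul_assoc]
  exact (mul_star_self_nonneg _).trans_eq hsq.symm

lemma posSemidef_entrywise_prod {κ 𝕜 : Type*} [RCLike 𝕜] (t : Finset κ) {A : κ → Matrix ι ι 𝕜}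
    (hA : ∀ l ∈ t, (A l).PosSemidef) : (of fun j k ↦ ∏ l ∈ t, A l j k).PosSemidef := by
  classical
  induction t using Finset.induction_on with
  | empty => simpa using posSemidef_mul_star fun _ : ι ↦ (1 : 𝕜)
  | insert l t hl ih =>
    rw [Finset.forall_mem_insert] at hA
    simpa only [Finset.prod_insert hl] using! hA.1.hadamard (ih hA.2)

lemma posSemidef_integral {𝕜 α : Type*} [RCLike 𝕜] [MeasurableSpace α] {μ : Measure α}
    {A : α → Matrix ι ι 𝕜} (hint : ∀ j k, Integrable (fun u ↦ A u j k) μ)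
    (hA : ∀ᵐ u ∂μ, (A u).PosSemidef) : (of fun j k ↦ ∫ u, A u j k ∂μ).PosSemidef := by
  refine ⟨Matrix.IsHermitian.ext fun j k ↦ ?_, fun x ↦ ?_⟩
  · simp only [Matrix.of_apply, RCLike.star_def, ← integral_conj]
    exact integral_congr_ae (hA.mono fun u hu ↦ hu.isHermitian.apply j k)
  · have hterm (j k : ι) : Integrable (fun u ↦ star (x j) * A u j k * x k) μ :=
      ((hint j k).const_mul _).mul_const _
    have hform : (∫ u, (x.sum fun j xj ↦ x.sum fun k xk ↦ star xj * A u j k * xk) ∂μ) =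
        x.sum fun j xj ↦ x.sum fun k xk ↦ star xj * (∫ u, A u j k ∂μ) * xk := by
      simp only [Finsupp.sum]
      rw [integral_finsetSum _ fun j _ ↦ integrable_finsetSum _ fun k _ ↦ hterm j k]
      simp only [integral_finsetSum _ fun k _ ↦ hterm _ k, integral_mul_const, integral_const_mul]
    exact (integral_nonneg_of_ae (hA.mono fun u hu ↦ hu.2 x)).trans_eq hform

lemma sum_sum_mul_mul_conj_nonneg [Fintype ι] {R : Type*} [CommRing R] [PartialOrder R]
    [StarRing R] {A : Matrix ι ι R} (hA : A.PosSemidef) (c : ι → R) :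
    0 ≤ ∑ j, ∑ k, A j k * c j * (starRingEnd R) (c k) := by
  simpa [starRingEnd_apply, dotProduct, Matrix.mulVec, Finset.mul_sum, mul_assoc, mul_left_comm]
    using hA.dotProduct_mulVec_nonneg (star c)

lemma conj_ofReal_cpow {u : ℝ} (hu : 0 ≤ u) (z : ℂ) :
    (starRingEnd ℂ) ((u : ℂ) ^ z) = (u : ℂ) ^ (starRingEnd ℂ) z := by
  rw [cpow_conj _ _ (by simp [arg_ofReal_of_nonneg hu, Real.pi_pos.ne]), conj_ofReal]

lemma posSemidef_mellin_add_conj {f : ℝ → ℝ} (hf : ∀ u, 0 < u → 0 ≤ f u) (z : ι → ℂ)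
    (hz : ∀ j k, MellinConvergent (fun u ↦ (f u : ℂ)) (z j + (starRingEnd ℂ) (z k))) :
    (of fun j k ↦ mellin (fun u ↦ (f u : ℂ)) (z j + (starRingEnd ℂ) (z k))).PosSemidef := by
  refine posSemidef_integral
    (A := fun u : ℝ ↦ of fun j k ↦ (u : ℂ) ^ (z j + (starRingEnd ℂ) (z k) - 1) • (f u : ℂ)) hz ?_
  refine ae_restrict_of_forall_mem measurableSet_Ioi fun u hu ↦ ?_
  have hu₀ : (u : ℂ) ≠ 0 := ofReal_ne_zero.mpr (ne_of_gt hu)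
  have hrank : (of fun j k ↦ (u : ℂ) ^ (z j + (starRingEnd ℂ) (z k) - 1) • (f u : ℂ)) =
      (f u / u) • of fun j k ↦ (u : ℂ) ^ z j * star ((u : ℂ) ^ z k) := by
    ext j k
    simp only [Matrix.of_apply, Matrix.smul_apply, RCLike.star_def, conj_ofReal_cpow (le_of_lt hu),
      cpow_sub _ _ hu₀, cpow_add _ _ hu₀, cpow_one, smul_eq_mul, real_smul, ofReal_div]
    ring
  rw [hrank]
  exact (posSemidef_mul_star _).smul (div_nonneg (hf u hu) (le_of_lt hu))

end PosSemidef

section DirichletEta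

/-- The Dirichlet eta function, the entire continuation of `∑ (-1) ^ n / (n + 1) ^ s`. It is encoded
through the cosine zeta function `∑ cos (2 π a n) / n ^ s` at `a = 1 / 2`, which Mathlib already
continues to the whole plane. -/
noncomputable def dirichletEta (s : ℂ) : ℂ :=
  -HurwitzZeta.cosZeta ((1 / 2 : ℝ) : UnitAddCircle) s

lemma differentiable_dirichletEta : Differentiable ℂ dirichletEta := by
  have hhalf : ((1 / 2 : ℝ) : UnitAddCircle) ≠ 0 := by
    rw [Ne, AddCircle.coe_eq_zero_iff_of_mem_Ico (by norm_num)]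
    norm_num
  exact (HurwitzZeta.differentiable_cosZeta_of_ne_zero hhalf).neg

lemma hasSum_dirichletEta {s : ℂ} (hs : 1 < s.re) :
    HasSum (fun n : ℕ ↦ (-1 : ℂ) ^ n / (n + 1 : ℂ) ^ s) (dirichletEta s) := by
  have hcos (n : ℕ) : Real.cos (2 * Real.pi * (1 / 2) * n) = (-1) ^ n := by
    rw [← Real.cos_nat_mul_pi]
    ring_nf
  have hshift := (hasSum_nat_add_iff' 1).mpr (HurwitzZeta.hasSum_nat_cosZeta (1 / 2) hs).neg
  simp only [hcos] at hshift
  simpa [dirichletEta, pow_succ, neg_div, zero_cpow (ne_zero_of_one_lt_re hs)] using hshift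

lemma dirichletEta_eq_of_one_lt_re {s : ℂ} (hs : 1 < s.re) :
    dirichletEta s = (1 - 2 ^ (1 - s)) * riemannZeta s := by
  have hzeta : HasSum (fun n : ℕ ↦ 1 / (n + 1 : ℂ) ^ s) (riemannZeta s) := by
    rw [zeta_eq_tsum_one_div_nat_add_one_cpow hs]
    refine Summable.hasSum ?_
    simpa using (summable_nat_add_iff 1).mpr (summable_one_div_nat_cpow.mpr hs)
  have hdiff : HasSum (fun n : ℕ ↦ 1 / (n + 1 : ℂ) ^ s - (-1) ^ n / (n + 1 : ℂ) ^ s)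
      (0 + 2 ^ (1 - s) * riemannZeta s) := by
    refine HasSum.even_add_odd (by simp) ?_
    convert! hzeta.mul_left (2 ^ (1 - s)) using 2 with n
    have hn : ((2 * n + 1 : ℕ) : ℂ) + 1 = ((2 : ℕ) : ℂ) * ((n + 1 : ℕ) : ℂ) := by
      push_cast
      ring
    rw [hn, natCast_mul_natCast_cpow, cpow_sub _ _ two_ne_zero, pow_succ, pow_mul, neg_one_sq,
      one_pow, cpow_one]
    push_cast
    ring
  linear_combination -(hzeta.sub (hasSum_dirichletEta hs)).unique hdiff

lemma setOf_one_lt_re_mem_nhds_two : {s : ℂ | 1 < s.re} ∈ 𝓝 2 :=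
  (isOpen_lt continuous_const continuous_re).mem_nhds (by simp)

-- `s = 1` is excluded because `riemannZeta 1` is a finite junk value: the right side would vanish
-- there, while `η(1) = log 2`.
lemma dirichletEta_eq {s : ℂ} (hs : s ≠ 1) :
    dirichletEta s = (1 - 2 ^ (1 - s)) * riemannZeta s := by
  have hη : AnalyticOnNhd ℂ dirichletEta {1}ᶜ :=
    differentiable_dirichletEta.differentiableOn.analyticOnNhd isOpen_compl_singleton
  have hζ : AnalyticOnNhd ℂ (fun z ↦ (1 - 2 ^ (1 - z)) * riemannZeta z) {1}ᶜ := by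
    refine DifferentiableOn.analyticOnNhd (fun z hz ↦ ?_) isOpen_compl_singleton
    have hpow : DifferentiableAt ℂ (fun z : ℂ ↦ 1 - (2 : ℂ) ^ (1 - z)) z :=
      ((differentiableAt_id.const_sub 1).const_cpow (.inl two_ne_zero)).const_sub 1
    exact (hpow.mul (differentiableAt_riemannZeta hz)).differentiableWithinAt
  refine hη.eqOn_of_preconnected_of_eventuallyEq hζ (z₀ := 2) ?_ (by simp) ?_ hs
  · exact (isConnected_compl_singleton_of_one_lt_rank (by simp) 1).isPreconnected
  · exact eventually_of_mem setOf_one_lt_re_mem_nhds_two fun z ↦ dirichletEta_eq_of_one_lt_re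

end DirichletEta

section FermiWeight

/-- The weight `1 / (e ^ u + 1)` of the Fermi–Dirac integrals, whose Mellin transform is `Γ η`. -/
noncomputable def fermiWeight (u : ℝ) : ℝ := (Real.exp u + 1)⁻¹

lemma fermiWeight_nonneg (u : ℝ) : 0 ≤ fermiWeight u :=
  inv_nonneg.mpr (by positivity)

lemma continuous_fermiWeight : Continuous fermiWeight :=
  (Real.continuous_exp.add continuous_const).inv₀ fun u ↦ (add_pos (Real.exp_pos u) one_pos).ne'

lemma fermiWeight_le_exp_neg (u : ℝ) : fermiWeight u ≤ Real.exp (-u) := by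
  rw [Real.exp_neg]
  exact inv_anti₀ (Real.exp_pos u) (by linarith)

lemma fermiWeight_le_one (u : ℝ) : fermiWeight u ≤ 1 :=
  inv_le_one_of_one_le₀ (by linarith [Real.exp_pos u])

lemma locallyIntegrableOn_fermiWeight (s : Set ℝ) :
    LocallyIntegrableOn (fun u ↦ (fermiWeight u : ℂ)) s :=
  (continuous_ofReal.comp continuous_fermiWeight).locallyIntegrable.locallyIntegrableOn s

lemma isBigO_fermiWeight_atTop :
    (fun u ↦ (fermiWeight u : ℂ)) =O[atTop] fun u ↦ Real.exp (-1 * u) :=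
  .of_norm_le fun u ↦ by
    simpa [abs_of_nonneg (fermiWeight_nonneg u)] using fermiWeight_le_exp_neg u

-- The exponent has the shape `-b`, here with `b = 0`, that the Mellin transform lemmas expect.
lemma isBigO_fermiWeight_zero :
    (fun u ↦ (fermiWeight u : ℂ)) =O[𝓝[>] 0] fun u : ℝ ↦ u ^ (-0 : ℝ) :=
  .of_norm_le fun u ↦ by
    simpa [abs_of_nonneg (fermiWeight_nonneg u)] using fermiWeight_le_one u

lemma mellinConvergent_fermiWeight {s : ℂ} (hs : 0 < s.re) :
    MellinConvergent (fun u ↦ (fermiWeight u : ℂ)) s :=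
  mellinConvergent_of_isBigO_rpow_exp one_pos (locallyIntegrableOn_fermiWeight _)
    isBigO_fermiWeight_atTop isBigO_fermiWeight_zero hs

lemma differentiableAt_mellin_fermiWeight {s : ℂ} (hs : 0 < s.re) :
    DifferentiableAt ℂ (mellin fun u ↦ (fermiWeight u : ℂ)) s :=
  mellin_differentiableAt_of_isBigO_rpow_exp one_pos (locallyIntegrableOn_fermiWeight _)
    isBigO_fermiWeight_atTop isBigO_fermiWeight_zero hs

lemma hasSum_fermiWeight {u : ℝ} (hu : 0 < u) :
    HasSum (fun n : ℕ ↦ (-1) ^ n * Real.exp (-(n + 1) * u)) (fermiWeight u) := by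
  have hlt : |-Real.exp (-u)| < 1 := by
    rwa [abs_neg, Real.abs_exp, Real.exp_lt_one_iff, neg_lt_zero]
  convert! (hasSum_geometric_of_abs_lt_one hlt).mul_left (Real.exp (-u)) using 1
  · ext n
    rw [neg_pow (Real.exp (-u)), ← Real.exp_nat_mul, mul_left_comm, ← Real.exp_add]
    ring_nf
  · rw [fermiWeight, Real.exp_neg, sub_neg_eq_add, ← mul_inv, mul_add, mul_one,
      mul_inv_cancel₀ (Real.exp_ne_zero u)]

lemma mellin_fermiWeight_of_one_lt_re {s : ℂ} (hs : 1 < s.re) :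
    mellin (fun u ↦ (fermiWeight u : ℂ)) s = Gamma s * dirichletEta s := by
  have hexpand : ∀ u ∈ Ioi (0 : ℝ), HasSum
      (fun n : ℕ ↦ (-1 : ℂ) ^ n * Real.exp (-(n + 1 : ℝ) * u)) (fermiWeight u : ℂ) :=
    fun u hu ↦ by exact_mod_cast hasSum_ofReal.mpr (hasSum_fermiWeight hu)
  have hsum : Summable fun n : ℕ ↦ ‖(-1 : ℂ) ^ n‖ / (n + 1 : ℝ) ^ s.re := by
    simpa using (summable_nat_add_iff 1).mpr (Real.summable_one_div_nat_rpow.mpr hs)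
  have hmellin := hasSum_mellin (fun n ↦ .inr (by positivity)) (one_pos.trans hs) hexpand hsum
  refine hmellin.unique ?_
  simpa [mul_div_assoc] using (hasSum_dirichletEta hs).mul_left (Gamma s)

lemma differentiableAt_Gamma_of_re_pos {s : ℂ} (hs : 0 < s.re) : DifferentiableAt ℂ Gamma s := by
  refine differentiableAt_Gamma s fun m hm ↦ hs.not_ge ?_
  simp [hm]

lemma mellin_fermiWeight {s : ℂ} (hs : 0 < s.re) :
    mellin (fun u ↦ (fermiWeight u : ℂ)) s = Gamma s * dirichletEta s := by
  have hopen : IsOpen {z : ℂ | 0 < z.re} := isOpen_lt continuous_const continuous_re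
  have hmellin : AnalyticOnNhd ℂ (mellin fun u ↦ (fermiWeight u : ℂ)) {z | 0 < z.re} :=
    DifferentiableOn.analyticOnNhd
      (fun z hz ↦ (differentiableAt_mellin_fermiWeight hz).differentiableWithinAt) hopen
  have hΓη : AnalyticOnNhd ℂ (fun z ↦ Gamma z * dirichletEta z) {z | 0 < z.re} :=
    DifferentiableOn.analyticOnNhd (fun z hz ↦ ((differentiableAt_Gamma_of_re_pos hz).mul
      (differentiable_dirichletEta z)).differentiableWithinAt) hopen
  exact hmellin.eqOn_of_preconnected_of_eventuallyEq hΓη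
    (convex_halfSpace_re_gt 0).isPreconnected (z₀ := 2) (by simp)
    (eventually_of_mem setOf_one_lt_re_mem_nhds_two fun z ↦ mellin_fermiWeight_of_one_lt_re) hs

end FermiWeight

theorem eta_gamma_zeta_matrix_posSemidef_general {ι κ : Type*} (t : Finset κ) (s : ι → κ → ℂ)
    (hs : ∀ j, ∀ l ∈ t, 0 < (s j l).re) :
    (of fun j k ↦ ∏ l ∈ t, Gamma (s j l + (starRingEnd ℂ) (s k l)) *
      dirichletEta (s j l + (starRingEnd ℂ) (s k l))).PosSemidef := by
  refine posSemidef_entrywise_prod t (A := fun l ↦ of fun j k ↦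
    Gamma (s j l + (starRingEnd ℂ) (s k l)) *
      dirichletEta (s j l + (starRingEnd ℂ) (s k l))) fun l hl ↦ ?_
  have hre (j k : ι) : 0 < (s j l + (starRingEnd ℂ) (s k l)).re :=
    add_pos (hs j l hl) (hs k l hl)
  simpa only [mellin_fermiWeight (hre _ _)] using
    posSemidef_mellin_add_conj (fun u _ ↦ fermiWeight_nonneg u) (fun j ↦ s j l)
      fun j k ↦ mellinConvergent_fermiWeight (hre j k)

/-- For `s_{j,ℓ} ∈ ℂ` with `Re(s_{j,ℓ}) > 0` and `s_{j,ℓ} + conj s_{k,ℓ} ≠ 1`, the matrix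
with `(j,k)` entry
`∏_{ℓ=1}^m (1 - 2^{1 - s_{j,ℓ} - conj s_{k,ℓ}}) Γ(s_{j,ℓ} + conj s_{k,ℓ}) ζ(s_{j,ℓ} + conj s_{k,ℓ})`
is positive semidefinite. -/
theorem eta_gamma_zeta_matrix_posSemidef (m n : ℕ) (s : Fin n → Fin m → ℂ)
    (hs : ∀ j l, 0 < (s j l).re)
    (hne : ∀ j k l, s j l + (starRingEnd ℂ) (s k l) ≠ 1) :
    ∀ c : Fin n → ℂ,
      0 ≤ ∑ j : Fin n, ∑ k : Fin n,
        (∏ l : Fin m,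
            (1 - (2 : ℂ) ^ (1 - s j l - (starRingEnd ℂ) (s k l)))
              * Complex.Gamma (s j l + (starRingEnd ℂ) (s k l))
              * riemannZeta (s j l + (starRingEnd ℂ) (s k l)))
          * c j * (starRingEnd ℂ) (c k) := by
  intro c
  simpa only [Matrix.of_apply, dirichletEta_eq (hne _ _ _), sub_sub, mul_left_comm, mul_assoc] using
    sum_sum_mul_mul_conj_nonneg
      (eta_gamma_zeta_matrix_posSemidef_general Finset.univ s fun j l _ ↦ hs j l) c
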